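/- For every J⊂K with U_J≠∅ one has X_{fJ}≠∅; the set X_f is nonempty and is a continuously differentiable submanifold of codimension n in C^1_n; and for every φ∈X_f the tangent space is T_φX_f = { χ∈C^1_n : for every μ∈{1,…,n}, (χ_μ)'(0) = Σ_{k=1}^{𝐤} Σ_{ν=1}^{n} ∂_{(k-1)n+ν} g_μ(φ̂) [ χ_ν(−d_k(Lφ)) − φ_ν'(−d_k(Lφ)) · Dd_k(Lφ)Lχ ] }. -/

import Mathlib

set_option linter.unusedSectionVars false

open Set

noncomputable section

/-- The compact interval `[-r,0]`. -/
abbrev Icc0 (r : ℝ) : Set ℝ := Set.Icc (-r) 0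

/-- Extension of a continuous map on `[-r,0]` to `ℝ`, by the value `0` outside. -/
def extFun {r : ℝ} {E : Type*} [TopologicalSpace E] [Zero E] (φ : C(Icc0 r, E)) : ℝ → E :=
  fun t => if h : t ∈ Icc0 r then φ ⟨t, h⟩ else 0

section extlemmas

variable {r : ℝ} {E : Type*} [NormedAddCommGroup E] [NormedSpace ℝ E]

lemma extFun_add (φ ψ : C(Icc0 r, E)) : extFun (φ + ψ) = extFun φ + extFun ψ := by
  funext t; by_cases h : t ∈ Icc0 r <;> simp [extFun, h]

lemma extFun_zero : extFun (0 : C(Icc0 r, E)) = 0 := by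
  funext t; by_cases h : t ∈ Icc0 r <;> simp [extFun, h]

lemma extFun_smul (c : ℝ) (φ : C(Icc0 r, E)) : extFun (c • φ) = c • extFun φ := by
  funext t; by_cases h : t ∈ Icc0 r <;> simp [extFun, h]

end extlemmas

/-- The space `C¹([-r,0],E)`, realized as the closed subspace of pairs `(φ, φ')` in
`C([-r,0],E) × C([-r,0],E)` such that `φ` is differentiable on `[-r,0]` with derivative `φ'`. -/
def C1sub (r : ℝ) (E : Type*) [NormedAddCommGroup E] [NormedSpace ℝ E] :
    Submodule ℝ (C(Icc0 r, E) × C(Icc0 r, E)) where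
  carrier := {p | ∀ t ∈ Icc0 r, HasDerivWithinAt (extFun p.1) (extFun p.2 t) (Icc0 r) t}
  add_mem' := by
    intro p q hp hq t ht
    have h := (hp t ht).add (hq t ht)
    have e1 : extFun (p + q).1 = fun s => extFun p.1 s + extFun q.1 s := by
      simp [Prod.fst_add, extFun_add]; rfl
    have e2 : extFun (p + q).2 t = extFun p.2 t + extFun q.2 t := by
      simp [Prod.snd_add, extFun_add]
    rw [e1, e2]; exact h
  zero_mem' := by
    intro t ht
    have e1 : extFun (0 : C(Icc0 r, E) × C(Icc0 r, E)).1 = fun _ : ℝ => (0 : E) := by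
      simp [extFun_zero]; rfl
    have e2 : extFun (0 : C(Icc0 r, E) × C(Icc0 r, E)).2 t = 0 := by
      simp [extFun_zero]
    rw [e1, e2]; exact hasDerivWithinAt_const _ _ _
  smul_mem' := by
    intro c p hp t ht
    have h := (hp t ht).const_smul c
    have e1 : extFun (c • p).1 = fun s => c • extFun p.1 s := by
      simp [Prod.smul_fst, extFun_smul]; rfl
    have e2 : extFun (c • p).2 t = c • extFun p.2 t := by
      simp [Prod.smul_snd, extFun_smul]
    rw [e1, e2]; exact h

/-- The Banach space `C¹([-r,0],E)`. -/
abbrev C1 (r : ℝ) (E : Type*) [NormedAddCommGroup E] [NormedSpace ℝ E] := ↥(C1sub r E)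

section C1ops

variable {r : ℝ} {E : Type*} [NormedAddCommGroup E] [NormedSpace ℝ E]

/-- Evaluation `φ(t)` of `φ ∈ C¹([-r,0],E)` (extended by `0` outside `[-r,0]`). -/
def evC (φ : C1 r E) (t : ℝ) : E := extFun φ.1.1 t

/-- Evaluation `φ'(t)` of the derivative of `φ ∈ C¹([-r,0],E)`. -/
def dvC (φ : C1 r E) (t : ℝ) : E := extFun φ.1.2 t

end C1ops

/-- The continuous linear map `ℝ → (Fin n → ℝ)` sending `x` to the vector `x·e_ν`. -/
def sCLM (n : ℕ) (ν : Fin n) : ℝ →L[ℝ] (Fin n → ℝ) :=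
  ContinuousLinearMap.pi (fun j => if j = ν then ContinuousLinearMap.id ℝ ℝ else 0)

/-- `ψ · e_ν` for a continuous map `ψ`. -/
def CMsingle {r : ℝ} {n : ℕ} (ν : Fin n) (φ : C(Icc0 r, ℝ)) : C(Icc0 r, Fin n → ℝ) :=
  ⟨fun t => sCLM n ν (φ t), (sCLM n ν).continuous.comp φ.continuous⟩

lemma extFun_CMsingle {r : ℝ} {n : ℕ} (ν : Fin n) (φ : C(Icc0 r, ℝ)) (t : ℝ) :
    extFun (CMsingle ν φ) t = sCLM n ν (extFun φ t) := by
  by_cases h : t ∈ Icc0 r <;> simp [extFun, CMsingle, h]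

/-- `ψ · e_ν ∈ C¹([-r,0],ℝⁿ)` for a scalar function `ψ ∈ C¹([-r,0],ℝ)`. -/
def singleC1 {r : ℝ} {n : ℕ} (ν : Fin n) (φ : C1 r ℝ) : C1 r (Fin n → ℝ) :=
  ⟨(CMsingle ν φ.1.1, CMsingle ν φ.1.2), by
    intro t ht
    have h := ((sCLM n ν).hasFDerivAt).comp_hasDerivWithinAt t (φ.2 t ht)
    have e1 : extFun (CMsingle ν φ.1.1) = (sCLM n ν) ∘ (extFun φ.1.1) := by
      funext s; exact extFun_CMsingle ν φ.1.1 s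
    rw [show (CMsingle ν φ.1.1, CMsingle ν φ.1.2).1 = CMsingle ν φ.1.1 from rfl,
      show (CMsingle ν φ.1.1, CMsingle ν φ.1.2).2 = CMsingle ν φ.1.2 from rfl,
      e1, extFun_CMsingle]
    exact h⟩

/-- The linear map `ℝⁿ → C¹([-r,0],ℝⁿ)`, `x ↦ Σ_ν x_ν ψ_ν · e_ν` (the map `Y·x`). -/
def Ymap {r : ℝ} {n : ℕ} (ψ : Fin n → C1 r ℝ) : (Fin n → ℝ) →ₗ[ℝ] C1 r (Fin n → ℝ) where
  toFun x := ∑ ν, x ν • singleC1 ν (ψ ν)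
  map_add' x y := by simp [add_smul, Finset.sum_add_distrib]
  map_smul' c x := by simp [smul_smul, Finset.smul_sum]

/-- The closed subspace `X₀ = {φ ∈ C¹ : φ'(0) = 0}`. -/
def X0sub (r : ℝ) (n : ℕ) : Submodule ℝ (C1 r (Fin n → ℝ)) where
  carrier := {φ | dvC φ 0 = 0}
  add_mem' := by
    intro φ ψ hφ hψ
    have : dvC (φ + ψ) 0 = dvC φ 0 + dvC ψ 0 := by
      simp [dvC, extFun_add]
    rw [Set.mem_setOf_eq] at *
    rw [this, hφ, hψ, add_zero]
  zero_mem' := by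
    show dvC (0 : C1 r (Fin n → ℝ)) 0 = 0
    simp [dvC, extFun_zero]
  smul_mem' := by
    intro c φ hφ
    have : dvC (c • φ) 0 = c • dvC φ 0 := by simp [dvC, extFun_smul]
    rw [Set.mem_setOf_eq] at *
    rw [this, hφ, smul_zero]

/-- The projection-like map `R φ = φ − Y·φ'(0)`. -/
def RKmap {r : ℝ} {n : ℕ} (ψ : Fin n → C1 r ℝ) (φ : C1 r (Fin n → ℝ)) : C1 r (Fin n → ℝ) :=
  φ - Ymap ψ (dvC φ 0)

section diffeos

variable {E : Type*} [NormedAddCommGroup E] [NormedSpace ℝ E]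
variable {E' : Type*} [NormedAddCommGroup E'] [NormedSpace ℝ E']

/-- `f` defines a `C¹`-diffeomorphism from `s` onto `t`: `f` is continuously differentiable
on `s`, injective on `s`, maps `s` onto `t`, and has a continuously differentiable inverse. -/
def IsC1DiffeoOn (f : E → E') (s : Set E) (t : Set E') : Prop :=
  ContDiffOn ℝ 1 f s ∧ Set.InjOn f s ∧ f '' s = t ∧
    ∃ g : E' → E, ContDiffOn ℝ 1 g t ∧ Set.InvOn g f s t

/-- The tangent cone of `X ⊆ E` at `x`: all velocities `c'(0)` of continuously differentiable
curves in `X` through `x`. -/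
def tangentSet (X : Set E) (x : E) : Set E :=
  {v | ∃ (c : ℝ → E) (ε : ℝ), 0 < ε ∧ ContDiffOn ℝ 1 c (Set.Ioo (-ε) ε) ∧
      (∀ s ∈ Set.Ioo (-ε) ε, c s ∈ X) ∧ c 0 = x ∧ HasDerivWithinAt c v (Set.Ioo (-ε) ε) 0}

/-- `X` is a continuously differentiable submanifold of codimension `m` of `E`. -/
def IsC1SubmanifoldCodim (X : Set E) (m : ℕ) : Prop :=
  ∀ x ∈ X, ∃ (O : Set E) (Φ : E → E) (H Q : Submodule ℝ E),
    IsOpen O ∧ x ∈ O ∧ IsClosed (H : Set E) ∧ IsCompl H Q ∧ Module.finrank ℝ Q = m ∧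
    IsOpen (Φ '' O) ∧ IsC1DiffeoOn Φ O (Φ '' O) ∧ Φ '' (X ∩ O) = (H : Set E) ∩ (Φ '' O)

/-- `X` is a continuously differentiable submanifold of `E`. -/
def IsC1Submanifold (X : Set E) : Prop :=
  ∀ x ∈ X, ∃ (O : Set E) (Φ : E → E) (H : Submodule ℝ E),
    IsOpen O ∧ x ∈ O ∧ IsClosed (H : Set E) ∧
    IsOpen (Φ '' O) ∧ IsC1DiffeoOn Φ O (Φ '' O) ∧ Φ '' (X ∩ O) = (H : Set E) ∩ (Φ '' O)

/-- `A` is an almost graph over `H`. -/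
def IsAlmostGraphOver (A : Set E) (H : Set E) : Prop :=
  ∃ (dm : Set E) (α : E → E), dm ⊆ H ∧ ContDiffOn ℝ 1 α dm ∧
    (∀ ζ ∈ dm ∩ A, α ζ = 0) ∧ (∀ ζ ∈ dm \ A, α ζ ∉ H) ∧
    IsC1DiffeoOn (fun ζ => ζ + α ζ) dm A

end diffeos

/-- The data of the delay differential system
`x'(t) = g(x(t-d_1(Lx_t)),…,x(t-d_kk(Lx_t)))`. -/
structure Setting (r : ℝ) (n kk : ℕ) (F : Type*) [NormedAddCommGroup F] [NormedSpace ℝ F] where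
  /-- The continuous linear map `L : C([-r,0],ℝⁿ) → F`. -/
  L : C(Icc0 r, Fin n → ℝ) →L[ℝ] F
  /-- The open set `W ⊆ F`. -/
  W : Set F
  Wopen : IsOpen W
  /-- The delay functions `d_k : W → [0,r]`. -/
  d : Fin kk → F → ℝ
  d_smooth : ∀ k, ContDiffOn ℝ 1 (d k) W
  d_mem : ∀ k, ∀ w ∈ W, d k w ∈ Set.Icc (0:ℝ) r
  /-- The open set `V ⊆ (ℝⁿ)^kk`. -/
  V : Set (Fin kk → Fin n → ℝ)
  Vopen : IsOpen V
  /-- The right hand side function `g : V → ℝⁿ`. -/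
  g : (Fin kk → Fin n → ℝ) → Fin n → ℝ
  g_smooth : ContDiffOn ℝ 1 g V

namespace Setting

variable {r : ℝ} {n kk : ℕ} {F : Type*} [NormedAddCommGroup F] [NormedSpace ℝ F]
variable (S : Setting r n kk F)

/-- `L` applied to (the `C⁰`-part of) `φ ∈ C¹`. -/
def Lof (φ : C1 r (Fin n → ℝ)) : F := S.L φ.1.1

/-- `φ̂ = (φ(-d_1(Lφ)),…,φ(-d_kk(Lφ)))`. -/
def hat (φ : C1 r (Fin n → ℝ)) : Fin kk → Fin n → ℝ := fun k => evC φ (-(S.d k (S.Lof φ)))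

/-- The domain `U = {φ ∈ C¹ : Lφ ∈ W, φ̂ ∈ V}`. -/
def U : Set (C1 r (Fin n → ℝ)) := {φ | S.Lof φ ∈ S.W ∧ S.hat φ ∈ S.V}

/-- The right hand side `f(φ) = g(φ̂)`. -/
def fmap (φ : C1 r (Fin n → ℝ)) : Fin n → ℝ := S.g (S.hat φ)

/-- The solution manifold `X_f = {φ ∈ U : φ'(0) = f(φ)}`. -/
def Xf : Set (C1 r (Fin n → ℝ)) := {φ | φ ∈ S.U ∧ dvC φ 0 = S.fmap φ}

/-- `W_J = {w ∈ W : d_j(w)=0 for j∈J, d_k(w)>0 for k∉J}`. -/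
def WJ (J : Finset (Fin kk)) : Set F :=
  {w | w ∈ S.W ∧ (∀ j ∈ J, S.d j w = 0) ∧ ∀ k ∉ J, 0 < S.d k w}

/-- `W^J = {w ∈ W : d_k(w)>0 for k∉J}`. -/
def WupJ (J : Finset (Fin kk)) : Set F :=
  {w | w ∈ S.W ∧ ∀ k ∉ J, 0 < S.d k w}

/-- `U_J = U ∩ L⁻¹(W_J)`. -/
def UJ (J : Finset (Fin kk)) : Set (C1 r (Fin n → ℝ)) := {φ | φ ∈ S.U ∧ S.Lof φ ∈ S.WJ J}

/-- `U^J = U ∩ L⁻¹(W^J)`. -/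
def UupJ (J : Finset (Fin kk)) : Set (C1 r (Fin n → ℝ)) := {φ | φ ∈ S.U ∧ S.Lof φ ∈ S.WupJ J}

/-- `X_{fJ} = X_f ∩ U_J`. -/
def XfJ (J : Finset (Fin kk)) : Set (C1 r (Fin n → ℝ)) := S.Xf ∩ S.UJ J

/-- Hypothesis (b): `g` is bounded. -/
def HypB : Prop := ∃ M, ∀ v ∈ S.V, ‖S.g v‖ ≤ M

/-- Hypothesis (d1b): `d₁ = 0` on `W` and `g` is bounded on subsets of `V` with bounded
first component. -/
def HypD1B (hk : 0 < kk) : Prop :=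
  (∀ w ∈ S.W, S.d ⟨0, hk⟩ w = 0) ∧
  ∀ B : Set (Fin n → ℝ), Bornology.IsBounded B →
    Bornology.IsBounded (S.g '' {v | v ∈ S.V ∧ v ⟨0, hk⟩ ∈ B})

/-- The partial derivative `∂_{(k-1)n+ν} g_μ (φ̂)`. -/
def dgCoeff (φ : C1 r (Fin n → ℝ)) (k : Fin kk) (ν : Fin n) (μ : Fin n) : ℝ :=
  fderivWithin ℝ S.g S.V (S.hat φ) (Pi.single k (Pi.single ν 1)) μ

/-- The right hand side of the formula for `Df_μ(φ)χ`. -/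
def dFormula (φ χ : C1 r (Fin n → ℝ)) (μ : Fin n) : ℝ :=
  ∑ k, ∑ ν, S.dgCoeff φ k ν μ *
    (evC χ (-(S.d k (S.Lof φ))) ν -
      dvC φ (-(S.d k (S.Lof φ))) ν * fderivWithin ℝ (S.d k) S.W (S.Lof φ) (S.Lof χ))

/-- The map `R^J(φ) = φ − Y_J(Lφ)·φ'(0)` of Section 4 of the paper. -/
def RJmap (y : Fin n → F → C1 r ℝ) (φ : C1 r (Fin n → ℝ)) : C1 r (Fin n → ℝ) :=
  φ - Ymap (fun ν => y ν (S.Lof φ)) (dvC φ 0)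

end Setting

section level

open Filter Topology

variable {E : Type*} [NormedAddCommGroup E] [NormedSpace ℝ E] [CompleteSpace E]
variable {Y : Type*} [NormedAddCommGroup Y] [NormedSpace ℝ Y] [FiniteDimensional ℝ Y]

lemma level_chart (U : Set E) (hU : IsOpen U) (h : E → Y) (A : E →L[ℝ] Y) (s : Y →L[ℝ] E)
    (hs : ∀ y, A (s y) = y) (x : E) (hx : x ∈ U) (hd : HasFDerivAt h A x)
    (hc : ContDiffOn ℝ 1 h U) :
    ∃ e : OpenPartialHomeomorph E E, x ∈ e.source ∧ e.source ⊆ U ∧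
      ContDiffOn ℝ 1 e e.source ∧ ContDiffOn ℝ 1 e.symm e.target ∧
      HasFDerivAt e (ContinuousLinearMap.id ℝ E) x ∧ 
      HasFDerivAt e.symm (ContinuousLinearMap.id ℝ E) (e x) ∧ 
      ∀ y, A (e y) = h y := by
  set Φ : E → E := fun y => y + s (h y - A y) with hΦ
  have hcΦ : ContDiffOn ℝ 1 Φ U :=
    contDiffOn_id.add (s.contDiff.comp_contDiffOn (hc.sub A.contDiff.contDiffOn))
  have hcx : ContDiffAt ℝ 1 Φ x := hcΦ.contDiffAt (hU.mem_nhds hx)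
  have hdΦ : HasFDerivAt Φ ((ContinuousLinearEquiv.refl ℝ E : E ≃L[ℝ] E) : E →L[ℝ] E) x := by
    have := (hasFDerivAt_id (𝕜 := ℝ) x).add (s.hasFDerivAt.comp x (hd.sub A.hasFDerivAt))
    convert! this using 1
    ext y; simp
  set e0 := hcx.toOpenPartialHomeomorph Φ hdΦ one_ne_zero with he0
  have hcoe : (e0 : E → E) = Φ := rfl
  have hx0 : x ∈ e0.source := hcx.mem_toOpenPartialHomeomorph_source hdΦ one_ne_zero
  have hinv : ContDiffAt ℝ 1 e0.symm (Φ x) := hcx.to_localInverse hdΦ one_ne_zero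
  have hdinv : HasFDerivAt e0.symm (ContinuousLinearMap.id ℝ E) (Φ x) :=
    ((hcx.hasStrictFDerivAt' hdΦ one_ne_zero).to_localInverse).hasFDerivAt
  have hev := hinv.eventually (by simp)
  obtain ⟨N, hN, hNo, hxN⟩ := eventually_nhds_iff.1 hev
  set s' : Set E := U ∩ (e0.source ∩ e0 ⁻¹' N) with hs'
  have hs'o : IsOpen s' := hU.inter (e0.isOpen_inter_preimage hNo)
  refine ⟨e0.restrOpen s' hs'o, ?_, ?_, ?_, ?_, hdΦ, hdinv, ?_⟩
  · exact ⟨hx0, hx, hx0, hxN⟩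
  · intro y hy; exact hy.2.1
  · exact hcΦ.mono (fun y hy => hy.2.1)
  · intro y hy
    have h1 : y ∈ e0.target ∧ e0.symm y ∈ s' := hy
    have h2 : y ∈ N := by
      have := h1.2.2.2
      rwa [mem_preimage, e0.right_inv h1.1] at this
    exact (hN y h2).contDiffWithinAt
  · intro y
    show A (Φ y) = h y
    simp [hΦ, hs]

lemma level_submanifold (U : Set E) (hU : IsOpen U) (h : E → Y) (h' : E → E →L[ℝ] Y)
    (hd : ∀ x ∈ U, HasFDerivAt h (h' x) x) (hc : ContDiffOn ℝ 1 h U)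
    (hs : ∀ x ∈ U, Function.Surjective (h' x)) :
    IsC1SubmanifoldCodim {x | x ∈ U ∧ h x = 0} (Module.finrank ℝ Y) ∧
    ∀ x, x ∈ U → h x = 0 → tangentSet {x | x ∈ U ∧ h x = 0} x = {v | h' x v = 0} := by
  have hsec : ∀ x ∈ U, ∃ s : Y →L[ℝ] E, ∀ y, h' x (s y) = y := by
    intro x hx
    obtain ⟨s, hs⟩ := (h' x).toLinearMap.exists_rightInverse_of_surjective
      (LinearMap.range_eq_top.2 (hs x hx))
    refine ⟨LinearMap.toContinuousLinearMap s, fun y => ?_⟩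
    simpa using LinearMap.congr_fun hs y
  constructor
  · rintro x ⟨hx, hx0⟩
    obtain ⟨s, hs⟩ := hsec x hx
    obtain ⟨e, hxe, heU, hce, hce', -, -, heA⟩ := level_chart U hU h (h' x) s hs x hx (hd x hx) hc
    have him : e '' e.source = e.target := e.image_source_eq_target
    refine ⟨e.source, e, LinearMap.ker (h' x).toLinearMap, LinearMap.range s.toLinearMap,
      e.open_source, hxe, ?_, ?_, ?_, ?_, ?_, ?_⟩
    · exact (h' x).isClosed_ker
    · constructor
      · rw [Submodule.disjoint_def]
        rintro _ hz ⟨y, rfl⟩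
        have : h' x (s y) = 0 := hz
        rw [hs] at this
        simp [this]
      · rw [codisjoint_iff, Submodule.eq_top_iff']
        intro z
        rw [Submodule.mem_sup]
        refine ⟨z - s (h' x z), ?_, s (h' x z), ⟨_, rfl⟩, by simp⟩
        simp [hs]
    · apply LinearMap.finrank_range_of_inj
      intro a b hab
      have := congrArg (h' x) hab
      simpa [hs] using this
    · rw [him]; exact e.open_target
    · rw [him]
      exact ⟨hce, e.injOn, him, e.symm, hce', e.invOn⟩
    · ext z
      constructor
      · rintro ⟨y, ⟨hy, hye⟩, rfl⟩
        refine ⟨?_, y, hye, rfl⟩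
        show h' x (e y) = 0
        rw [heA, hy.2]
      · rintro ⟨hz, y, hye, rfl⟩
        refine ⟨y, ⟨⟨heU hye, ?_⟩, hye⟩, rfl⟩
        have : h' x (e y) = 0 := hz
        rwa [heA] at this
  · intro x hx hx0
    ext v
    constructor
    · rintro ⟨c, ε, hε, -, hcX, hc0, hcv⟩
      have hmem : Ioo (-ε) ε ∈ 𝓝 (0:ℝ) := Ioo_mem_nhds (by linarith) hε
      have h1 : HasDerivAt c v 0 := hcv.hasDerivAt hmem
      have h2 : HasDerivAt (h ∘ c) (h' x v) 0 := by
        have := hd x hx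
        rw [← hc0] at this ⊢
        exact this.comp_hasDerivAt 0 h1
      have h3 : HasDerivAt (h ∘ c) 0 0 := by
        apply (hasDerivAt_const (0:ℝ) (0:Y)).congr_of_eventuallyEq
        filter_upwards [hmem] with t ht
        exact (hcX t ht).2
      exact h2.unique h3
    · intro hv
      have hv : h' x v = 0 := hv
      obtain ⟨s, hs⟩ := hsec x hx
      obtain ⟨e, hxe, heU, hce, hce', -, hde, heA⟩ :=
        level_chart U hU h (h' x) s hs x hx (hd x hx) hc
      have hl : ContDiff ℝ 1 (fun t : ℝ => e x + t • v) := by fun_prop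
      have hT : (fun t : ℝ => e x + t • v) ⁻¹' e.target ∈ 𝓝 (0:ℝ) := by
        apply hl.continuous.continuousAt.preimage_mem_nhds
        apply e.open_target.mem_nhds
        simpa using e.map_source hxe
      obtain ⟨ε, hε, hball⟩ := Metric.mem_nhds_iff.1 hT
      rw [Real.ball_eq_Ioo, zero_sub, zero_add] at hball
      refine ⟨fun t => e.symm (e x + t • v), ε, hε, ?_, ?_, ?_, ?_⟩
      · exact hce'.comp hl.contDiffOn hball
      · intro t ht
        have hh := hball ht
        refine ⟨heU (e.map_target hh), ?_⟩
        rw [← heA, e.right_inv hh]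
        simp [heA, hx0, hv]
      · simp [e.left_inv hxe]
      · apply HasDerivAt.hasDerivWithinAt
        have h1 : HasDerivAt (fun t : ℝ => e x + t • v) v 0 := by
          simpa using ((hasDerivAt_id (0:ℝ)).smul_const v).const_add (e x)
        have h2 : HasFDerivAt e.symm (ContinuousLinearMap.id ℝ E) (e x + (0:ℝ) • v) := by
          simpa using hde
        exact h2.comp_hasDerivAt (0:ℝ) h1

end level

section extension

open Filter Topology MeasureTheory

variable {r : ℝ} {E : Type*} [NormedAddCommGroup E] [NormedSpace ℝ E]

abbrev PairC (r : ℝ) (E : Type*) [NormedAddCommGroup E] [NormedSpace ℝ E] :=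
  C(Icc0 r, E) × C(Icc0 r, E)

/-- The second component, extended continuously to the real line. -/
def dExt (hr : -r ≤ 0) (p : PairC r E) (t : ℝ) : E := p.2 (projIcc (-r) 0 hr t)

lemma dExt_cont (hr : -r ≤ 0) : Continuous (fun q : PairC r E × ℝ => dExt hr q.1 q.2) := by
  unfold dExt
  have : Continuous (fun q : PairC r E × ℝ => projIcc (-r) 0 hr q.2) :=
    continuous_projIcc.comp continuous_snd
  fun_prop

lemma dExt_cont_right (hr : -r ≤ 0) (p : PairC r E) : Continuous (dExt hr p) :=
  (dExt_cont hr).comp (by fun_prop : Continuous (fun t : ℝ => (p, t)))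

lemma dExt_norm (hr : -r ≤ 0) (p : PairC r E) (t : ℝ) : ‖dExt hr p t‖ ≤ ‖p‖ :=
  (p.2.norm_coe_le_norm _).trans (norm_snd_le p)

lemma dExt_eq (hr : -r ≤ 0) (p : PairC r E) {t : ℝ} (ht : t ∈ Icc0 r) :
    dExt hr p t = extFun p.2 t := by
  unfold dExt extFun
  rw [dif_pos ht, projIcc_of_mem hr ht]

variable [CompleteSpace E]

/-- Extended evaluation, as a continuous linear map. -/
def evL (hr : -r ≤ 0) (t : ℝ) : PairC r E →L[ℝ] E :=
  LinearMap.mkContinuous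
    { toFun := fun p => p.1 ⟨0, hr, le_refl 0⟩ + ∫ s in (0:ℝ)..t, dExt hr p s
      map_add' := by
        intro p q
        have : ∀ s, dExt hr (p + q) s = dExt hr p s + dExt hr q s := fun s => by simp [dExt]
        simp only [this]
        rw [intervalIntegral.integral_add ((dExt_cont_right hr p).intervalIntegrable _ _)
          ((dExt_cont_right hr q).intervalIntegrable _ _)]
        simp only [Prod.fst_add, ContinuousMap.add_apply]
        abel
      map_smul' := by
        intro c p
        have : ∀ s, dExt hr (c • p) s = c • dExt hr p s := fun s => by simp [dExt]
        simp only [this, intervalIntegral.integral_smul]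
        simp }
    (1 + |t|) (by
      intro p
      have h1 : ‖∫ s in (0:ℝ)..t, dExt hr p s‖ ≤ ‖p‖ * |t - 0| :=
        intervalIntegral.norm_integral_le_of_norm_le_const (fun s _ => dExt_norm hr p s)
      have h2 : ‖p.1 ⟨0, hr, le_refl 0⟩‖ ≤ ‖p‖ := (p.1.norm_coe_le_norm _).trans (norm_fst_le p)
      simp only [LinearMap.coe_mk, AddHom.coe_mk]
      refine (norm_add_le _ _).trans ?_
      rw [sub_zero] at h1
      linarith)

lemma evL_apply (hr : -r ≤ 0) (t : ℝ) (p : PairC r E) :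
    evL hr t p = p.1 ⟨0, hr, le_refl 0⟩ + ∫ s in (0:ℝ)..t, dExt hr p s := rfl

lemma evL_hasDerivAt (hr : -r ≤ 0) (p : PairC r E) (t : ℝ) :
    HasDerivAt (fun t => evL hr t p) (dExt hr p t) t := by
  simp only [evL_apply]
  apply HasDerivAt.const_add
  exact intervalIntegral.integral_hasDerivAt_right ((dExt_cont_right hr p).intervalIntegrable _ _)
    ((dExt_cont_right hr p).stronglyMeasurableAtFilter _ _) (dExt_cont_right hr p).continuousAt

lemma evL_lip (hr : -r ≤ 0) (t t' : ℝ) :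
    ‖(evL hr t : PairC r E →L[ℝ] E) - evL hr t'‖ ≤ |t - t'| := by
  apply ContinuousLinearMap.opNorm_le_bound _ (abs_nonneg _)
  intro p
  have h1 : ‖∫ s in t'..t, dExt hr p s‖ ≤ ‖p‖ * |t - t'| :=
    intervalIntegral.norm_integral_le_of_norm_le_const (fun s _ => dExt_norm hr p s)
  rw [mul_comm]
  have h2 : evL hr t p - evL hr t' p = ∫ s in t'..t, dExt hr p s := by
    rw [evL_apply, evL_apply, add_sub_add_left_eq_sub]
    exact intervalIntegral.integral_interval_sub_left
      ((dExt_cont_right hr p).intervalIntegrable _ _)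
      ((dExt_cont_right hr p).intervalIntegrable _ _)
  show ‖evL hr t p - evL hr t' p‖ ≤ _
  rw [h2]
  exact h1

lemma evL_cont (hr : -r ≤ 0) : Continuous (fun t => (evL hr t : PairC r E →L[ℝ] E)) := by
  have : LipschitzWith 1 (fun t => (evL hr t : PairC r E →L[ℝ] E)) := by
    apply LipschitzWith.of_dist_le_mul
    intro t t'
    rw [dist_eq_norm, Real.dist_eq]
    simpa using evL_lip hr t t'
  exact this.continuous

lemma evL_strict (hr : -r ≤ 0) (u : PairC r E × ℝ) :
    HasStrictFDerivAt (fun q : PairC r E × ℝ => evL hr q.2 q.1)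
      ((evL hr u.2).coprod (ContinuousLinearMap.toSpanSingleton ℝ (dExt hr u.1 u.2))) u := by
  refine hasStrictFDerivAt_uncurry_coprod (𝕜 := ℝ) (f := fun (p : PairC r E) (t : ℝ) => evL hr t p)
    (f₁ := fun _ t => evL hr t)
    (f₂ := fun p t => ContinuousLinearMap.toSpanSingleton ℝ (dExt hr p t)) ?_ ?_ ?_ ?_
  · exact Eventually.of_forall fun v =>
      (evL hr v.2 : PairC r E →L[ℝ] E).hasFDerivAt (x := v.1)
  · exact Eventually.of_forall fun v => (evL_hasDerivAt hr v.1 v.2).hasFDerivAt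
  · exact ((evL_cont hr).comp continuous_snd).continuousAt
  · have : Continuous (fun v : PairC r E × ℝ =>
        ContinuousLinearMap.toSpanSingletonCLE (𝕜 := ℝ) (dExt hr v.1 v.2)) :=
      (ContinuousLinearEquiv.continuous _).comp (dExt_cont hr)
    exact this.continuousAt

lemma evL_contDiff (hr : -r ≤ 0) :
    ContDiff ℝ 1 (fun q : PairC r E × ℝ => evL hr q.2 q.1) := by
  rw [contDiff_one_iff_hasFDerivAt]
  refine ⟨_, ?_, fun u => (evL_strict hr u).hasFDerivAt⟩
  have h1 : Continuous (fun v : PairC r E × ℝ =>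
        ContinuousLinearMap.toSpanSingletonCLE (𝕜 := ℝ) (dExt hr v.1 v.2)) :=
      (ContinuousLinearEquiv.continuous _).comp (dExt_cont hr)
  have h2 : Continuous (fun v : PairC r E × ℝ => (evL hr v.2 : PairC r E →L[ℝ] E)) :=
    (evL_cont hr).comp continuous_snd
  have h3 := (h2.clm_comp (continuous_const (y := ContinuousLinearMap.fst ℝ (PairC r E) ℝ))).add
    (h1.clm_comp (continuous_const (y := ContinuousLinearMap.snd ℝ (PairC r E) ℝ)))
  convert! h3 using 2

lemma mem_C1sub_iff (hr : -r ≤ 0) (p : PairC r E) :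
    p ∈ C1sub r E ↔ ∀ t : Icc0 r, evL hr t p = p.1 t := by
  constructor
  · rintro hp ⟨t, ht⟩
    have hc : ContinuousOn (extFun p.1) (Icc t 0) := fun s hs =>
      ((hp s ⟨ht.1.trans hs.1, hs.2⟩).continuousWithinAt).mono (Icc_subset_Icc ht.1 le_rfl)
    have h := intervalIntegral.integral_eq_sub_of_hasDerivAt_of_le (f := extFun p.1)
      (f' := dExt hr p) ht.2 hc (fun s hs => by
        have hs' : s ∈ Icc0 r := ⟨ht.1.trans hs.1.le, hs.2.le⟩
        rw [dExt_eq hr p hs']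
        exact (hp s hs').hasDerivAt (Icc_mem_nhds (lt_of_le_of_lt ht.1 hs.1) hs.2))
      ((dExt_cont_right hr p).intervalIntegrable _ _)
    rw [evL_apply, intervalIntegral.integral_symm, h]
    have h0 : (0:ℝ) ∈ Icc0 r := ⟨hr, le_refl 0⟩
    simp only [extFun, dif_pos h0, dif_pos ht]
    abel
  · intro h t ht
    rw [← dExt_eq hr p ht]
    apply (evL_hasDerivAt hr p t).hasDerivWithinAt.congr
    · intro s hs
      rw [h ⟨s, hs⟩]; simp [extFun, hs.1, hs.2]
    · rw [h ⟨t, ht⟩]; simp [extFun, ht.1, ht.2]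

lemma C1_complete (hr : -r ≤ 0) : CompleteSpace (C1 r E) := by
  have : IsClosed ((C1sub r E : Submodule ℝ (PairC r E)) : Set (PairC r E)) := by
    have he : ((C1sub r E : Submodule ℝ (PairC r E)) : Set (PairC r E)) =
        ⋂ t : Icc0 r, {p | evL hr t p = p.1 t} := by
      ext p
      rw [mem_iInter]
      exact mem_C1sub_iff hr p
    rw [he]
    apply isClosed_iInter
    intro t
    exact isClosed_eq (evL hr t).continuous (by fun_prop)
  exact this.completeSpace_coe

lemma evC_eq (hr : -r ≤ 0) (φ : C1 r E) {t : ℝ} (ht : t ∈ Icc0 r) :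
    evC φ t = evL hr t φ.1 := by
  rw [(mem_C1sub_iff hr φ.1).1 φ.2 ⟨t, ht⟩]
  simp only [evC, extFun, dif_pos ht]

lemma dvC_eq (hr : -r ≤ 0) (φ : C1 r E) {t : ℝ} (ht : t ∈ Icc0 r) :
    dvC φ t = dExt hr φ.1 t := (dExt_eq hr φ.1 ht).symm

/-- The continuous linear map `φ ↦ φ'(0)`. -/
def dv0 (hr : -r ≤ 0) : C1 r E →L[ℝ] E :=
  (ContinuousMap.evalCLM ℝ (⟨0, hr, le_refl 0⟩ : Icc0 r)).comp
    ((ContinuousLinearMap.snd ℝ _ _).comp (C1sub r E).subtypeL)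

lemma dv0_apply (hr : -r ≤ 0) (φ : C1 r E) : dv0 hr φ = dvC φ 0 := by
  have h0 : (0:ℝ) ∈ Icc0 r := ⟨hr, le_refl 0⟩
  simp only [dvC, extFun, dif_pos h0]
  rfl

end extension

section lemmaA

open Filter Topology

variable {r : ℝ} {E : Type*} [NormedAddCommGroup E] [NormedSpace ℝ E] [FiniteDimensional ℝ E]
variable {G : Type*} [NormedAddCommGroup G] [NormedSpace ℝ G] [FiniteDimensional ℝ G]

/-- The function `t ↦ sin (c t) / c • v`. -/
def osc (r : ℝ) (c : ℝ) (hc : c ≠ 0) (v : E) : C1 r E :=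
  ⟨(⟨fun t => (Real.sin (c * t) / c) • v, by fun_prop⟩,
    ⟨fun t => Real.cos (c * t) • v, by fun_prop⟩), by
    intro t ht
    have h1 : HasDerivAt (fun t : ℝ => (Real.sin (c * t) / c) • v) (Real.cos (c * t) • v) t := by
      have := ((((hasDerivAt_id t).const_mul c).sin).div_const c).smul_const v
      convert! this using 2
      field_simp
      simp
    have e2 : extFun (⟨fun t => Real.cos (c * t) • v, by fun_prop⟩ : C(Icc0 r, E)) t
        = Real.cos (c * t) • v := by
      simp only [extFun, dif_pos ht]; rfl
    show HasDerivWithinAt _ (extFun (⟨fun t => Real.cos (c * t) • v, by fun_prop⟩ : C(Icc0 r, E)) t)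
      _ _
    rw [e2]
    apply h1.hasDerivWithinAt.congr
    · intro s hs
      simp only [extFun, dif_pos hs]; rfl
    · simp only [extFun, dif_pos ht]; rfl⟩

lemma osc_dv (hr : -r ≤ 0) (c : ℝ) (hc : c ≠ 0) (v : E) : dv0 hr (osc r c hc v) = v := by
  show Real.cos (c * 0) • v = v
  simp

lemma osc_norm (c : ℝ) (hc : 0 < c) (v : E) : ‖(osc r c hc.ne' v).1.1‖ ≤ ‖v‖ / c := by
  rw [ContinuousMap.norm_le _ (by positivity)]
  intro t
  show ‖(Real.sin (c * t) / c) • v‖ ≤ _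
  rw [norm_smul, norm_div, Real.norm_of_nonneg hc.le, div_mul_eq_mul_div]
  gcongr
  have := Real.abs_sin_le_one (c * t)
  rw [Real.norm_eq_abs]
  nlinarith [norm_nonneg v]

lemma lemmaA (hr : -r ≤ 0) (T : C(Icc0 r, E) →L[ℝ] G) (v : E) :
    ∃ χ : C1 r E, T χ.1.1 = 0 ∧ dvC χ 0 = v := by
  set T1 : C1 r E →ₗ[ℝ] G := T.toLinearMap ∘ₗ
    (LinearMap.fst ℝ _ _ ∘ₗ (C1sub r E).subtype) with hT1
  obtain ⟨s, hs⟩ := T1.rangeRestrict.exists_rightInverse_of_surjective T1.range_rangeRestrict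
  set M : Submodule ℝ E := (LinearMap.ker T1).map (dv0 hr).toLinearMap with hM
  have hMc : IsClosed (M : Set E) := M.closed_of_finiteDimensional
  set B : LinearMap.range T1 →ₗ[ℝ] E := (dv0 hr).toLinearMap ∘ₗ s with hB
  have hBc : Continuous B := B.continuous_of_finiteDimensional
  let x : ℕ → C1 r E := fun j => osc r ((j:ℝ) + 1) (by positivity) v
  have hx0 : Tendsto (fun j => (x j).1.1) atTop (𝓝 0) := by
    apply squeeze_zero_norm (fun j : ℕ => osc_norm ((j:ℝ)+1) (by positivity) v)
    have := (tendsto_one_div_add_atTop_nhds_zero_nat (𝕜 := ℝ)).const_mul ‖v‖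
    simpa [div_eq_mul_inv] using this
  have hTx : Tendsto (fun j => T1.rangeRestrict (x j)) atTop (𝓝 0) := by
    rw [tendsto_subtype_rng]
    have := (T.continuous.tendsto 0).comp hx0
    rw [map_zero] at this
    exact this
  have hBx : Tendsto (fun j => v - B (T1.rangeRestrict (x j))) atTop (𝓝 v) := by
    have := (hBc.tendsto 0).comp hTx
    rw [map_zero] at this
    simpa using this.const_sub v
  have hmem : v ∈ M := by
    refine hMc.mem_of_tendsto hBx (Eventually.of_forall fun j => ?_)
    refine ⟨x j - s (T1.rangeRestrict (x j)), ?_, ?_⟩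
    · show T1 (x j - s (T1.rangeRestrict (x j))) = 0
      have h1 := congrArg Subtype.val (LinearMap.congr_fun hs (T1.rangeRestrict (x j)))
      have h2 : T1 (s (T1.rangeRestrict (x j))) = T1 (x j) := h1
      rw [map_sub, h2, sub_self]
    · show dv0 hr (x j - s (T1.rangeRestrict (x j))) = v - dv0 hr (s (T1.rangeRestrict (x j)))
      rw [map_sub, osc_dv]
  obtain ⟨χ, hχ, hχv⟩ := hmem
  exact ⟨χ, hχ, by rw [← dv0_apply hr]; exact hχv⟩

end lemmaA

section final

open Filter Topology

variable {r : ℝ} {n kk : ℕ} {F : Type*} [NormedAddCommGroup F] [NormedSpace ℝ F]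

namespace Setting

variable (S : Setting r n kk F)

/-- `Lof` as a continuous linear map. -/
def LC : C1 r (Fin n → ℝ) →L[ℝ] F :=
  S.L.comp ((ContinuousLinearMap.fst ℝ _ _).comp (C1sub r (Fin n → ℝ)).subtypeL)

lemma LC_apply (φ : C1 r (Fin n → ℝ)) : S.LC φ = S.Lof φ := rfl

lemma t_mem (k : Fin kk) {w : F} (hw : w ∈ S.W) : -(S.d k w) ∈ Icc0 r := by
  have := S.d_mem k w hw
  exact ⟨by linarith [this.2], by linarith [this.1]⟩

/-- The hat map, with extended evaluation. -/
def hatE (hr : -r ≤ 0) (φ : C1 r (Fin n → ℝ)) : Fin kk → Fin n → ℝ :=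
  fun k => evL hr (-(S.d k (S.LC φ))) φ.1

lemma hatE_eq (hr : -r ≤ 0) {φ : C1 r (Fin n → ℝ)} (h : S.Lof φ ∈ S.W) :
    S.hat φ = S.hatE hr φ := by
  funext k
  exact evC_eq hr φ (S.t_mem k h)

lemma isOpen_LW : IsOpen {φ | S.Lof φ ∈ S.W} := S.Wopen.preimage S.LC.continuous

lemma hat_contDiffOn (hr : -r ≤ 0) : ContDiffOn ℝ 1 S.hat {φ | S.Lof φ ∈ S.W} := by
  have : ContDiffOn ℝ 1 (S.hatE hr) {φ | S.Lof φ ∈ S.W} := by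
    rw [contDiffOn_pi]
    intro k
    have h1 : ContDiffOn ℝ 1 (fun φ : C1 r (Fin n → ℝ) => (φ.1, -(S.d k (S.LC φ))))
        {φ | S.Lof φ ∈ S.W} := by
      apply ContDiffOn.prodMk
      · exact (ContinuousLinearMap.contDiff (𝕜 := ℝ) (E := C1 r (Fin n → ℝ)) (F := PairC r (Fin n → ℝ))
          (C1sub r (Fin n → ℝ)).subtypeL).contDiffOn
      · exact ((S.d_smooth k).comp (ContinuousLinearMap.contDiff (𝕜 := ℝ) (E := C1 r (Fin n → ℝ)) (F := F)
          S.LC).contDiffOn (fun φ hφ => hφ)).neg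
    exact (evL_contDiff hr).comp_contDiffOn h1
  exact this.congr (fun φ hφ => S.hatE_eq hr hφ)

/-- The derivative of the hat map. -/
def hat' (hr : -r ≤ 0) (φ : C1 r (Fin n → ℝ)) :
    C1 r (Fin n → ℝ) →L[ℝ] (Fin kk → Fin n → ℝ) :=
  ContinuousLinearMap.pi fun k =>
    ((evL hr (-(S.d k (S.LC φ)))).coprod
      (ContinuousLinearMap.toSpanSingleton ℝ (dExt hr φ.1 (-(S.d k (S.LC φ)))))).comp
      ((C1sub r (Fin n → ℝ)).subtypeL.prod (-((fderiv ℝ (S.d k) (S.LC φ)).comp S.LC)))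

lemma hat'_apply (hr : -r ≤ 0) (φ χ : C1 r (Fin n → ℝ)) (h : S.Lof φ ∈ S.W) (k : Fin kk) :
    S.hat' hr φ χ k = evC χ (-(S.d k (S.Lof φ))) -
      (fderivWithin ℝ (S.d k) S.W (S.Lof φ) (S.Lof χ)) • dvC φ (-(S.d k (S.Lof φ))) := by
  rw [evC_eq hr χ (S.t_mem k h), dvC_eq hr φ (S.t_mem k h), fderivWithin_of_isOpen S.Wopen h]
  show evL hr (-(S.d k (S.LC φ))) χ.1 +
    (-(fderiv ℝ (S.d k) (S.LC φ) (S.LC χ))) • dExt hr φ.1 (-(S.d k (S.LC φ))) = _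
  rw [neg_smul, ← sub_eq_add_neg]
  rfl

lemma hat_hasFDerivAt (hr : -r ≤ 0) (φ : C1 r (Fin n → ℝ)) (h : S.Lof φ ∈ S.W) :
    HasFDerivAt S.hat (S.hat' hr φ) φ := by
  have : HasFDerivAt (S.hatE hr) (S.hat' hr φ) φ := by
    refine (hasFDerivAt_pi' (𝕜 := ℝ) (E := C1 r (Fin n → ℝ)) (F' := fun _ : Fin kk => Fin n → ℝ)).2
      fun k => ?_
    have hd : HasFDerivAt (S.d k) (fderiv ℝ (S.d k) (S.LC φ)) (S.LC φ) :=
      (((S.d_smooth k).contDiffAt (S.Wopen.mem_nhds h)).differentiableAt one_ne_zero).hasFDerivAt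
    have h1 : HasFDerivAt (fun φ : C1 r (Fin n → ℝ) => (φ.1, -(S.d k (S.LC φ))))
        ((C1sub r (Fin n → ℝ)).subtypeL.prod (-((fderiv ℝ (S.d k) (S.LC φ)).comp S.LC))) φ :=
      ((C1sub r (Fin n → ℝ)).subtypeL.hasFDerivAt).prodMk ((hd.comp φ S.LC.hasFDerivAt).neg)
    exact HasFDerivAt.comp (𝕜 := ℝ) (E := C1 r (Fin n → ℝ)) (F := PairC r (Fin n → ℝ) × ℝ)
      (G := Fin n → ℝ) (f := fun φ : C1 r (Fin n → ℝ) => (φ.1, -(S.d k (S.LC φ))))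
      (g := fun q : PairC r (Fin n → ℝ) × ℝ => evL hr q.2 q.1) φ
      (evL_strict hr (φ.1, -(S.d k (S.LC φ)))).hasFDerivAt h1
  apply this.congr_of_eventuallyEq
  filter_upwards [S.isOpen_LW.mem_nhds h] with ψ hψ
  exact S.hatE_eq hr hψ

lemma isOpen_U (hr : -r ≤ 0) : IsOpen S.U :=
  (S.hat_contDiffOn hr).continuousOn.isOpen_inter_preimage S.isOpen_LW S.Vopen

/-- The defining function of the solution manifold. -/
def hfun (φ : C1 r (Fin n → ℝ)) : Fin n → ℝ := dvC φ 0 - S.fmap φ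

/-- Its derivative. -/
def hfun' (hr : -r ≤ 0) (φ : C1 r (Fin n → ℝ)) : C1 r (Fin n → ℝ) →L[ℝ] (Fin n → ℝ) :=
  dv0 hr - (fderiv ℝ S.g (S.hat φ)).comp (S.hat' hr φ)

lemma Xf_eq : S.Xf = {φ | φ ∈ S.U ∧ S.hfun φ = 0} := by
  ext φ
  show (φ ∈ S.U ∧ dvC φ 0 = S.fmap φ) ↔ (φ ∈ S.U ∧ dvC φ 0 - S.fmap φ = 0)
  rw [sub_eq_zero]

lemma hfun_eq (hr : -r ≤ 0) : S.hfun = fun φ => dv0 hr φ - S.g (S.hat φ) := by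
  funext φ
  rw [dv0_apply]; rfl

lemma hfun_contDiffOn (hr : -r ≤ 0) : ContDiffOn ℝ 1 S.hfun S.U := by
  rw [S.hfun_eq hr]
  refine (ContinuousLinearMap.contDiff (𝕜 := ℝ) (E := C1 r (Fin n → ℝ)) (F := Fin n → ℝ)
    (dv0 hr)).contDiffOn.sub ?_
  exact S.g_smooth.comp ((S.hat_contDiffOn hr).mono fun φ hφ => hφ.1) (fun φ hφ => hφ.2)

lemma hfun_hasFDerivAt (hr : -r ≤ 0) (φ : C1 r (Fin n → ℝ)) (h : φ ∈ S.U) :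
    HasFDerivAt S.hfun (S.hfun' hr φ) φ := by
  rw [S.hfun_eq hr]
  have hg : HasFDerivAt S.g (fderiv ℝ S.g (S.hat φ)) (S.hat φ) :=
    ((S.g_smooth.contDiffAt (S.Vopen.mem_nhds h.2)).differentiableAt one_ne_zero).hasFDerivAt
  exact (dv0 hr).hasFDerivAt.sub (hg.comp φ (S.hat_hasFDerivAt hr φ h.1))

lemma exists_corr [FiniteDimensional ℝ F] (hr : -r ≤ 0) (φ : C1 r (Fin n → ℝ))
    (h : S.Lof φ ∈ S.W) (v : Fin n → ℝ) :
    ∃ χ : C1 r (Fin n → ℝ), S.Lof χ = 0 ∧ (∀ k, evC χ (-(S.d k (S.Lof φ))) = 0) ∧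
      dvC χ 0 = v := by
  obtain ⟨χ, h1, h2⟩ := lemmaA hr (S.L.prod (ContinuousLinearMap.pi fun k : Fin kk =>
    (ContinuousMap.evalCLM ℝ (⟨-(S.d k (S.Lof φ)), S.t_mem k h⟩ : Icc0 r) :
      C(Icc0 r, Fin n → ℝ) →L[ℝ] (Fin n → ℝ)))) v
  refine ⟨χ, congrArg Prod.fst h1, fun k => ?_, h2⟩
  have h3 := congrFun (congrArg Prod.snd h1) k
  simp only [evC, extFun, dif_pos (S.t_mem k h)]
  exact h3

lemma hfun'_surj [FiniteDimensional ℝ F] (hr : -r ≤ 0) (φ : C1 r (Fin n → ℝ)) (h : φ ∈ S.U) :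
    Function.Surjective (S.hfun' hr φ) := by
  intro v
  obtain ⟨χ, h1, h2, h3⟩ := S.exists_corr hr φ h.1 v
  refine ⟨χ, ?_⟩
  have h4 : S.hat' hr φ χ = 0 := by
    funext k
    rw [S.hat'_apply hr φ χ h.1, h1, h2]
    simp
  show dv0 hr χ - fderiv ℝ S.g (S.hat φ) (S.hat' hr φ χ) = v
  rw [h4, dv0_apply, h3]
  simp

lemma exists_XfJ [FiniteDimensional ℝ F] (hr : -r ≤ 0) (φ : C1 r (Fin n → ℝ)) (h : φ ∈ S.U) :
    ∃ ψ ∈ S.Xf, S.Lof ψ = S.Lof φ := by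
  obtain ⟨χ, h1, h2, h3⟩ := S.exists_corr hr φ h.1 (S.fmap φ - dvC φ 0)
  have hL : S.Lof (φ + χ) = S.Lof φ := by
    rw [← LC_apply, map_add, LC_apply, LC_apply, h1, add_zero]
  have hh : S.hat (φ + χ) = S.hat φ := by
    funext k
    have h4 : evC (φ + χ) (-(S.d k (S.Lof φ))) =
        evC φ (-(S.d k (S.Lof φ))) + evC χ (-(S.d k (S.Lof φ))) := by
      simp [evC, extFun_add]
    unfold hat
    rw [hL, h4, h2, add_zero]
  refine ⟨φ + χ, ⟨⟨?_, ?_⟩, ?_⟩, hL⟩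
  · rw [hL]; exact h.1
  · rw [hh]; exact h.2
  · unfold fmap
    rw [hh, ← dv0_apply hr, map_add, dv0_apply, dv0_apply, h3]
    unfold fmap
    abel

lemma hfun'_eq_zero_iff (hr : -r ≤ 0) (φ χ : C1 r (Fin n → ℝ)) (h : φ ∈ S.U) :
    S.hfun' hr φ χ = 0 ↔ ∀ μ : Fin n, dvC χ 0 μ = S.dFormula φ χ μ := by
  have h1 : ∀ μ, S.dFormula φ χ μ = fderiv ℝ S.g (S.hat φ) (S.hat' hr φ χ) μ := by
    intro μ
    have hu : S.hat' hr φ χ =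
        ∑ k, ∑ ν, S.hat' hr φ χ k ν • (Pi.single k (Pi.single ν 1) : Fin kk → Fin n → ℝ) := by
      funext i j
      simp only [Finset.sum_apply, Pi.smul_apply, smul_eq_mul]
      rw [Finset.sum_eq_single i, Finset.sum_eq_single j]
      · simp
      · intro b _ hb; simp [Pi.single_eq_of_ne hb.symm]
      · simp
      · intro b _ hb; simp [Pi.single_eq_of_ne hb.symm]
      · simp
    rw [hu]
    simp only [map_sum, map_smul, Finset.sum_apply, Pi.smul_apply, smul_eq_mul]
    unfold dFormula
    refine Finset.sum_congr rfl fun k _ => Finset.sum_congr rfl fun ν _ => ?_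
    rw [S.hat'_apply hr φ χ h.1, dgCoeff, fderivWithin_of_isOpen S.Vopen h.2]
    simp only [Pi.sub_apply, Pi.smul_apply, smul_eq_mul]
    ring
  have h2 : S.hfun' hr φ χ = dvC χ 0 - fderiv ℝ S.g (S.hat φ) (S.hat' hr φ χ) := by
    rw [← dv0_apply hr]; rfl
  rw [h2, sub_eq_zero, funext_iff]
  simp only [h1]

end Setting

end final


variable {r : ℝ} {n kk : ℕ} {F : Type*} [NormedAddCommGroup F] [NormedSpace ℝ F]
  [FiniteDimensional ℝ F]

/-- Proposition 2.3: each `X_{fJ}` with `U_J ≠ ∅` is nonempty, `X_f ≠ ∅` is a continuously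
differentiable submanifold of codimension `n` of `C¹`, and the tangent spaces are as stated. -/
theorem statement2 (hr : 0 < r) (S : Setting r n kk F) (hV : S.U.Nonempty) :
    (∀ J : Finset (Fin kk), (S.UJ J).Nonempty → (S.XfJ J).Nonempty) ∧
    S.Xf.Nonempty ∧ IsC1SubmanifoldCodim S.Xf n ∧
    (∀ φ ∈ S.Xf, tangentSet S.Xf φ =
      {χ : C1 r (Fin n → ℝ) | ∀ μ : Fin n, dvC χ 0 μ = S.dFormula φ χ μ}) := by
  have hr' : -r ≤ 0 := by linarith
  have : CompleteSpace (C1 r (Fin n → ℝ)) := C1_complete hr'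
  have key := level_submanifold S.U (S.isOpen_U hr') S.hfun (S.hfun' hr')
    (S.hfun_hasFDerivAt hr') (S.hfun_contDiffOn hr') (S.hfun'_surj hr')
  rw [← S.Xf_eq, Module.finrank_fin_fun] at key
  refine ⟨?_, ?_, key.1, ?_⟩
  · rintro J ⟨φ, hφ, hJ⟩
    obtain ⟨ψ, hψ, hL⟩ := S.exists_XfJ hr' φ hφ
    refine ⟨ψ, hψ, hψ.1, ?_⟩
    rw [hL]; exact hJ
  · obtain ⟨φ, hφ⟩ := hV
    obtain ⟨ψ, hψ, -⟩ := S.exists_XfJ hr' φ hφ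
    exact ⟨ψ, hψ⟩
  · intro φ hφ
    have hφ' := hφ
    rw [S.Xf_eq] at hφ'
    refine (key.2 φ hφ'.1 hφ'.2).trans ?_
    ext χ
    exact S.hfun'_eq_zero_iff hr' φ χ hφ.1
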